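/- arXiv:0803.1175 — 3 statements merged into one kernel-verified Lean document; each statement's English description precedes it below -/
import Mathlib

section
/- Let X be a principal (Alexandrov-discrete) topological space, i.e., one in which arbitrary intersections of open sets are open. Then X is pre-Hausdorff if and only if X is regular (every point not in a closed set A can be separated from A by disjoint open sets). -/
/-- `x` and `y` admit a T₀ separation: some open set contains one of them but not the other. -/
def T0Sep {X : Type*} [TopologicalSpace X] (x y : X) : Prop :=
  ∃ U : Set X, IsOpen U ∧ ((x ∈ U ∧ y ∉ U) ∨ (y ∈ U ∧ x ∉ U))

/-- `x` and `y` admit a T₂ separation: disjoint open sets around them. -/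
def T2Sep {X : Type*} [TopologicalSpace X] (x y : X) : Prop :=
  ∃ U V : Set X, IsOpen U ∧ IsOpen V ∧ x ∈ U ∧ y ∈ V ∧ U ∩ V = ∅

/-- A space is pre-Hausdorff (T₀,₂) if every T₀-separated pair is T₂-separated. -/
def PreHausdorff (X : Type*) [TopologicalSpace X] : Prop :=
  ∀ x y : X, T0Sep x y → T2Sep x y

/-- A space is principal (Alexandrov-discrete) if arbitrary intersections of open sets
are open. -/
def IsPrincipal (X : Type*) [TopologicalSpace X] : Prop :=
  ∀ S : Set (Set X), (∀ U ∈ S, IsOpen U) → IsOpen (⋂₀ S)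

/-- Regularity (without closed points): every point outside a closed set can be separated
from it by disjoint open sets. -/
def IsRegularSpace (X : Type*) [TopologicalSpace X] : Prop :=
  ∀ A : Set X, IsClosed A → ∀ p ∉ A,
    ∃ U V : Set X, IsOpen U ∧ IsOpen V ∧ p ∈ U ∧ A ⊆ V ∧ U ∩ V = ∅

/-!
Being pre-Hausdorff is Mathlib's `R1Space`. Every regular space is R₁, and an R₁ space in which
every point has a compact neighbourhood is regular. A principal space is of the latter kind: the
intersection of all open sets around `x` is open, and it is compact because any open set containing
`x` contains all of it.
-/

open Topology

section

variable {X : Type*} [TopologicalSpace X]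

theorem t0Sep_iff_not_inseparable {x y : X} : T0Sep x y ↔ ¬Inseparable x y :=
  not_inseparable_iff_exists_open.symm

theorem disjoint_nhds_nhdsSet_iff_exists_isOpen {x : X} {s : Set X} :
    Disjoint (𝓝 x) (𝓝ˢ s) ↔
      ∃ U V : Set X, IsOpen U ∧ IsOpen V ∧ x ∈ U ∧ s ⊆ V ∧ U ∩ V = ∅ := by
  simp only [← nhdsSet_singleton, ← separatedNhds_iff_disjoint, SeparatedNhds,
    Set.singleton_subset_iff, Set.disjoint_iff_inter_eq_empty]

theorem t2Sep_iff_disjoint_nhds {x y : X} : T2Sep x y ↔ Disjoint (𝓝 x) (𝓝 y) := by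
  simp only [T2Sep, ← nhdsSet_singleton (x := y), disjoint_nhds_nhdsSet_iff_exists_isOpen,
    Set.singleton_subset_iff]

theorem preHausdorff_iff_r1Space : PreHausdorff X ↔ R1Space X := by
  simp only [PreHausdorff, t0Sep_iff_not_inseparable, t2Sep_iff_disjoint_nhds,
    r1Space_iff_inseparable_or_disjoint_nhds, or_iff_not_imp_left]

theorem isRegularSpace_iff_regularSpace : IsRegularSpace X ↔ RegularSpace X := by
  simp only [IsRegularSpace, ← disjoint_nhds_nhdsSet_iff_exists_isOpen, regularSpace_iff]
  exact ⟨fun h _ _ hA hp ↦ (h _ hA _ hp).symm, fun h _ hA _ hp ↦ (h hA hp).symm⟩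

theorem isPrincipal_iff_alexandrovDiscrete : IsPrincipal X ↔ AlexandrovDiscrete X :=
  (alexandrovDiscrete_iff X).symm

end

theorem principal_preHausdorff_iff_regular_general (X : Type*) [TopologicalSpace X]
    [WeaklyLocallyCompactSpace X] : PreHausdorff X ↔ IsRegularSpace X := by
  rw [preHausdorff_iff_r1Space, isRegularSpace_iff_regularSpace]
  exact ⟨fun _ : R1Space X ↦ inferInstance, fun _ : RegularSpace X ↦ inferInstance⟩

/-- A principal space is pre-Hausdorff iff it is regular. -/
theorem principal_preHausdorff_iff_regular (X : Type*) [TopologicalSpace X]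
    (hX : IsPrincipal X) : PreHausdorff X ↔ IsRegularSpace X := by
  have : AlexandrovDiscrete X := isPrincipal_iff_alexandrovDiscrete.mp hX
  exact principal_preHausdorff_iff_regular_general X
end

section
/- For a finite set X, there is a bijection between the set of pre-Hausdorff topologies on X and the set of partitions (equivalently, equivalence relations) on X. -/
/-!
A space is pre-Hausdorff if and only if its `T₀` quotient is Hausdorff. If the topology is moreover
Alexandrov-discrete (as it always is on a finite set), the quotient is discrete, and the topology,
being induced from its `T₀` quotient, is determined by the relation of topological inseparability.
Conversely, pulling back the discrete topology along `X → X / r` makes `r` the inseparability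
relation.
-/

open Topology

/-- The partition topology of an equivalence relation, whose open sets are the unions of equivalence
classes, encoded as the pullback of the discrete topology on the quotient. -/
abbrev partitionTopology {X : Type*} (r : Setoid X) : TopologicalSpace X :=
  .induced (Quotient.mk r) ⊥

section PartitionTopology

variable {X : Type*}

theorem r1Space_partitionTopology (r : Setoid X) : @R1Space X (partitionTopology r) :=
  letI : TopologicalSpace (Quotient r) := ⊥
  haveI : DiscreteTopology (Quotient r) := ⟨rfl⟩
  R1Space.induced (Quotient.mk r)

theorem alexandrovDiscrete_partitionTopology (r : Setoid X) :
    @AlexandrovDiscrete X (partitionTopology r) :=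
  letI : TopologicalSpace (Quotient r) := ⊥
  haveI : DiscreteTopology (Quotient r) := ⟨rfl⟩
  letI : TopologicalSpace X := partitionTopology r
  IsInducing.alexandrovDiscrete (f := Quotient.mk r) ⟨rfl⟩

theorem inseparableSetoid_partitionTopology (r : Setoid X) :
    @inseparableSetoid X (partitionTopology r) = r := by
  let : TopologicalSpace (Quotient r) := ⊥
  have : DiscreteTopology (Quotient r) := ⟨rfl⟩
  let : TopologicalSpace X := partitionTopology r
  have hmk : IsInducing (Quotient.mk r) := ⟨rfl⟩
  ext x y
  calc Inseparable x y
      ↔ Inseparable (Quotient.mk r x) (Quotient.mk r y) := hmk.inseparable_iff.symm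
    _ ↔ Quotient.mk r x = Quotient.mk r y := inseparable_iff_eq
    _ ↔ r x y := Quotient.eq

theorem partitionTopology_inseparableSetoid [t : TopologicalSpace X] [R0Space X]
    [AlexandrovDiscrete X] : partitionTopology (inseparableSetoid X) = t := by
  have : AlexandrovDiscrete (SeparationQuotient X) := Quotient.instAlexandrovDiscrete
  have : T1Space (SeparationQuotient X) := SeparationQuotient.t1Space_iff.mpr ‹_›
  have hdiscrete : DiscreteTopology (SeparationQuotient X) := inferInstance
  calc partitionTopology (inseparableSetoid X)
      = .induced SeparationQuotient.mk inferInstance :=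
        congrArg (TopologicalSpace.induced SeparationQuotient.mk) hdiscrete.eq_bot.symm
    _ = t := SeparationQuotient.isInducing_mk.eq_induced.symm

end PartitionTopology

theorem preHausdorff_topologies_equiv_partitions_general (X : Type*) :
    Nonempty ({t : TopologicalSpace X // @PreHausdorff X t ∧ @AlexandrovDiscrete X t} ≃
      Setoid X) :=
  ⟨{ toFun t := @inseparableSetoid X t.1
     invFun r := ⟨partitionTopology r,
       (@preHausdorff_iff_r1Space X (partitionTopology r)).mpr (r1Space_partitionTopology r),
       alexandrovDiscrete_partitionTopology r⟩
     left_inv := by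
       rintro ⟨t, hpre, halex⟩
       have : R1Space X := preHausdorff_iff_r1Space.mp hpre
       exact Subtype.ext partitionTopology_inseparableSetoid
     right_inv := inseparableSetoid_partitionTopology }⟩

/-- On a finite set, the pre-Hausdorff topologies are in bijection with the
equivalence relations (partitions). -/
theorem preHausdorff_topologies_equiv_partitions (X : Type*) [Finite X] :
    Nonempty ({t : TopologicalSpace X // @PreHausdorff X t} ≃ Setoid X) :=
  (preHausdorff_topologies_equiv_partitions_general X).map
    (Equiv.subtypeEquivRight fun t ↦ (and_iff_left (@Finite.toAlexandrovDiscrete X t _)).symm).trans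
end

section
/- Let X and Y be finite pre-Hausdorff topological spaces. Then X and Y are homeomorphic if and only if there exists a bijection e : X → Y such that for all x, x' ∈ X, x and x' are topologically inseparable in X if and only if e(x) and e(x') are topologically inseparable in Y (i.e., e induces a cardinality-preserving correspondence between the partitions of X and Y into minimal open sets). -/
/-!
The topology of an Alexandrov-discrete space, in particular of a finite one, is determined by its
specialization preorder, so homeomorphisms between such spaces are the isomorphisms of these
preorders. A pre-Hausdorff space is an R₁ space, and there the specialization preorder is symmetric,
hence is inseparability itself.
-/

open Topology

section AlexandrovDiscrete

variable {X Y : Type*} [TopologicalSpace X] [TopologicalSpace Y] [AlexandrovDiscrete X]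

theorem continuous_iff_forall_specializes {f : X → Y} :
    Continuous f ↔ ∀ x x' : X, x ⤳ x' → f x ⤳ f x' := by
  refine ⟨fun hf x x' h ↦ h.map hf, fun hf ↦ continuous_def.2 fun s hs ↦ ?_⟩
  exact isOpen_iff_forall_specializes.2 fun x x' h hx' ↦ (hf x x' h).mem_open hs hx'

theorem nonempty_homeomorph_iff_exists_equiv_specializes [AlexandrovDiscrete Y] :
    Nonempty (X ≃ₜ Y) ↔ ∃ e : X ≃ Y, ∀ x x' : X, x ⤳ x' ↔ e x ⤳ e x' := by
  constructor
  · rintro ⟨f⟩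
    exact ⟨f.toEquiv, fun _ _ ↦ f.isInducing.specializes_iff.symm⟩
  · rintro ⟨e, he⟩
    have he_symm (y y' : Y) (h : y ⤳ y') : e.symm y ⤳ e.symm y' := by
      simpa only [he, e.apply_symm_apply] using h
    exact ⟨{ e with
      continuous_toFun := continuous_iff_forall_specializes.2 fun x x' ↦ (he x x').1
      continuous_invFun := continuous_iff_forall_specializes.2 he_symm }⟩

theorem finite_preHausdorff_homeomorphic_iff_general [AlexandrovDiscrete Y]
    [R0Space X] [R0Space Y] :
    Nonempty (X ≃ₜ Y) ↔
      ∃ e : X ≃ Y, ∀ x x' : X, Inseparable x x' ↔ Inseparable (e x) (e x') := by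
  simpa only [specializes_iff_inseparable] using
    nonempty_homeomorph_iff_exists_equiv_specializes (X := X) (Y := Y)

end AlexandrovDiscrete

/-- Finite pre-Hausdorff spaces are homeomorphic iff some bijection between them
preserves topological inseparability (i.e. induces a cardinality-preserving
correspondence of the generating partitions). -/
theorem finite_preHausdorff_homeomorphic_iff {X Y : Type*}
    [TopologicalSpace X] [TopologicalSpace Y] [Finite X] [Finite Y]
    (hX : PreHausdorff X) (hY : PreHausdorff Y) :
    Nonempty (X ≃ₜ Y) ↔
      ∃ e : X ≃ Y, ∀ x x' : X, Inseparable x x' ↔ Inseparable (e x) (e x') := by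
  have := preHausdorff_iff_r1Space.1 hX
  have := preHausdorff_iff_r1Space.1 hY
  exact finite_preHausdorff_homeomorphic_iff_general
end
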